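/- Let E = {ξ ∈ ℝ^{2×2} : (λ_1(ξ), λ_2(ξ)) ∈ Λ_E, det ξ > 0} where Λ_E = {(a_1, a_2), (b_1, b_2)} with 0 < a_1 < b_1 < a_2 < b_2, and set θ̲ = (−a_1 a_2 + b_1 b_2)/(b_1 + b_2 − a_1 − a_2). Then Rco_f E = {ξ ∈ ℝ^{2×2} : (λ_1(ξ), λ_2(ξ)) ∈ R(Λ_E), det ξ > 0}, where R(Λ_E) is the set of points (x_1, x_2) ∈ ℝ² such that: a_1 ≤ x_1 ≤ x_2 ≤ b_2; x_2 ≥ a_1 a_2 / x_1; x_2 ≤ (−a_1 a_2 + θ̲(a_1 + a_2) − θ̲ x_1)/(−x_1 + θ̲) whenever a_1 ≤ x_1 ≤ b_1; and x_2 ≤ b_1 b_2 / x_1. -/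

import Mathlib

open MeasureTheory Filter

attribute [local instance] Classical.propDecidable
attribute [local instance] Matrix.frobeniusNormedAddCommGroup Matrix.frobeniusNormedSpace

noncomputable section

/-- The space of real `N × n` matrices. -/
abbrev Mat (N n : ℕ) : Type := Matrix (Fin N) (Fin n) ℝ

/-- A function `f : ℝ^{N×n} → ℝ` is rank one convex. -/
def RankOneConvexFun {N n : ℕ} (f : Mat N n → ℝ) : Prop :=
  ∀ lam ∈ Set.Icc (0:ℝ) 1, ∀ ξ η : Mat N n, (ξ - η).rank = 1 →
    f (lam • ξ + (1 - lam) • η) ≤ lam * f ξ + (1 - lam) * f η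

/-- The hull `Rco_f E`. -/
def RcoF {N n : ℕ} (E : Set (Mat N n)) : Set (Mat N n) :=
  {ξ | ∀ f : Mat N n → ℝ, RankOneConvexFun f → (∀ η ∈ E, f η ≤ 0) → f ξ ≤ 0}

/-- A set of matrices is rank one convex. -/
def RankOneConvexSet {N n : ℕ} (S : Set (Mat N n)) : Prop :=
  ∀ A ∈ S, ∀ B ∈ S, (A - B).rank = 1 → ∀ t ∈ Set.Icc (0:ℝ) 1, t • A + (1 - t) • B ∈ S

/-- The property `(H_I(U))`, phrased on lists of (weight, matrix) pairs. -/
inductive HIProp {N n : ℕ} (U : Set (Mat N n)) : List (ℝ × Mat N n) → Prop where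
  | single (l : ℝ) (ξ : Mat N n) (hξ : ξ ∈ U) : HIProp U [(l, ξ)]
  | pair (l₁ l₂ : ℝ) (ξ₁ ξ₂ : Mat N n) (h₁ : ξ₁ ∈ U) (h₂ : ξ₂ ∈ U)
      (hrank : (ξ₁ - ξ₂).rank = 1) : HIProp U [(l₁, ξ₁), (l₂, ξ₂)]
  | step (L rest : List (ℝ × Mat N n)) (l₁ l₂ : ℝ) (ξ₁ ξ₂ : Mat N n)
      (hperm : L.Perm ((l₁, ξ₁) :: (l₂, ξ₂) :: rest)) (hrest : rest ≠ [])
      (h₁ : ξ₁ ∈ U) (h₂ : ξ₂ ∈ U) (hrank : (ξ₁ - ξ₂).rank = 1)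
      (hrec : HIProp U ((l₁ + l₂, ((l₁ + l₂)⁻¹) • (l₁ • ξ₁ + l₂ • ξ₂)) :: rest)) :
      HIProp U L

/-- The family `(λ_i, ξ_i)_{1 ≤ i ≤ I}` satisfies `(H_I(U))`. -/
def SatisfiesH {N n : ℕ} (U : Set (Mat N n)) (I : ℕ) (l : Fin I → ℝ)
    (ξ : Fin I → Mat N n) : Prop :=
  HIProp U (List.ofFn fun i => (l i, ξ i))

/-- The gradient of a map `u : ℝ^n → ℝ^N`, as an `N × n` matrix. -/
def matGrad {N n : ℕ} (u : (Fin n → ℝ) → Fin N → ℝ) (x : Fin n → ℝ) : Mat N n :=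
  LinearMap.toMatrix' (fderiv ℝ u x).toLinearMap

/-- `u` is affine on the set `s`. -/
def AffineOn {N n : ℕ} (u : (Fin n → ℝ) → Fin N → ℝ) (s : Set (Fin n → ℝ)) : Prop :=
  ∃ (A : Mat N n) (b : Fin N → ℝ), ∀ x ∈ s, u x = A.mulVec x + b

/-- `u` is piecewise affine on the open set `Ω`. -/
def PiecewiseAffineOn {N n : ℕ} (u : (Fin n → ℝ) → Fin N → ℝ)
    (Ω : Set (Fin n → ℝ)) : Prop :=
  ContinuousOn u (closure Ω) ∧
  ∃ P : ℕ → Set (Fin n → ℝ),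
    (∀ k, IsOpen (P k)) ∧ (∀ k, P k ⊆ Ω) ∧
    (∀ k l, k ≠ l → Disjoint (P k) (P l)) ∧
    volume (Ω \ ⋃ k, P k) = 0 ∧ ∀ k, AffineOn u (P k)

/-- `u` is piecewise `C¹` on the open set `Ω`. -/
def PiecewiseC1On {N n : ℕ} (u : (Fin n → ℝ) → Fin N → ℝ)
    (Ω : Set (Fin n → ℝ)) : Prop :=
  ContinuousOn u (closure Ω) ∧
  ∃ P : ℕ → Set (Fin n → ℝ),
    (∀ k, IsOpen (P k)) ∧ (∀ k, P k ⊆ Ω) ∧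
    (∀ k l, k ≠ l → Disjoint (P k) (P l)) ∧
    volume (Ω \ ⋃ k, P k) = 0 ∧ ∀ k, ContDiffOn ℝ 1 u (P k)

/-- `u ∈ φ + W₀^{1,∞}(Ω; ℝ^N)`: `u` is Lipschitz on `closure Ω` and agrees with `φ`
on the boundary of `Ω`. -/
def MemW01inf {N n : ℕ} (Ω : Set (Fin n → ℝ)) (φ u : (Fin n → ℝ) → Fin N → ℝ) : Prop :=
  (∃ C : NNReal, LipschitzOnWith C u (closure Ω)) ∧ ∀ x ∈ frontier Ω, u x = φ x

/-- `K` has the relaxation property with respect to `E`. -/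
def HasRelaxationProperty {N n : ℕ} (K E : Set (Mat N n)) : Prop :=
  ∀ Ω : Set (Fin n → ℝ), IsOpen Ω → Bornology.IsBounded Ω →
    ∀ ξ ∈ K, ∀ b : Fin N → ℝ,
      ∃ u : ℕ → (Fin n → ℝ) → Fin N → ℝ,
        (∀ ν, PiecewiseAffineOn (u ν) Ω) ∧
        (∀ ν, MemW01inf Ω (fun x => ξ.mulVec x + b) (u ν)) ∧
        (∀ ν, ∀ᵐ x ∂(volume.restrict Ω), matGrad (u ν) x ∈ E ∪ K) ∧
        (∃ C : NNReal, ∀ ν, LipschitzOnWith C (u ν) (closure Ω)) ∧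
        TendstoUniformlyOn u (fun x => ξ.mulVec x + b) atTop (closure Ω) ∧
        Tendsto (fun ν => ∫ x in Ω, Metric.infDist (matGrad (u ν) x) E) atTop (nhds 0)

/-- The singular values of a square matrix, in nondecreasing order:
the square roots of the eigenvalues of `ξ ξᵀ`, sorted. -/
def singularValues {n : ℕ} (ξ : Matrix (Fin n) (Fin n) ℝ) (i : Fin n) : ℝ :=
  Real.sqrt ((Matrix.isHermitian_mul_conjTranspose_self ξ).eigenvalues
    (Tuple.sort (Matrix.isHermitian_mul_conjTranspose_self ξ).eigenvalues i))

end

section Statements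

open Metric Set

/-!
Identifying `ℝ²` with `ℂ`, every real `2 × 2` matrix has the form `h ↦ z h + w h̄`. Its determinant
`|z|² - |w|²` is affine along rank one lines, and its conformal norm `|z|` is convex; when the
determinant is nonnegative, the singular values are `|z| ± |w|`. In the `(|z|, det)` plane the set
`E` is a pair of points, and `R(Λ_E)` becomes the trapezoid cut out by the horizontal lines through
the two points and by the region to the left of the chord joining them, which in singular values is
the hyperbola `(θ - x₁) (x₂ - θ) = (θ - a₁) (a₂ - θ)`. The three inequalities defining the trapezoid
come from the rank one convex functions `-det`, `det` and `2θ|z| - det`, so the hull is contained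
in it.

Conversely, since the singular values interlace, two symmetric matrices with eigenvalues `a₁, a₂`
and `b₁, b₂` can be chosen with a singular difference, and the segment between them projects onto
the chord. The identity `2 diag(y, x) = [[y, 0], [τ, x]] + [[y, 0], [-τ, x]]` then decreases `|z|`
at constant determinant. Rotating `z` and `w` independently transports both laminations to
arbitrary matrices.
-/

section RankOneConvexity

variable {N n : ℕ} {f g : Mat N n → ℝ} {E : Set (Mat N n)} {ξ : Mat N n} {c : ℝ}

lemma rankOneConvexFun_of_convexOn (hf : ConvexOn ℝ univ f) : RankOneConvexFun f :=
  fun _ ht _ _ _ => hf.2 (mem_univ _) (mem_univ _) ht.1 (sub_nonneg.mpr ht.2) (by ring)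

lemma RankOneConvexFun.add (hf : RankOneConvexFun f) (hg : RankOneConvexFun g) :
    RankOneConvexFun (f + g) := by
  intro t ht ξ η hrank
  have hfξη := hf t ht ξ η hrank
  have hgξη := hg t ht ξ η hrank
  simp only [Pi.add_apply]
  linarith

lemma subset_RcoF : E ⊆ RcoF E := fun _ hη _ _ hE => hE _ hη

lemma RcoF.le_of_forall_le (hξ : ξ ∈ RcoF E) (hf : RankOneConvexFun f) (hE : ∀ η ∈ E, f η ≤ c) :
    f ξ ≤ c := by
  have hconst : RankOneConvexFun fun _ : Mat N n => -c :=
    rankOneConvexFun_of_convexOn (convexOn_const _ convex_univ)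
  have hle := hξ _ (hf.add hconst) fun η hη => by
    simpa only [Pi.add_apply, add_neg_le_iff_le_add, zero_add] using hE η hη
  simpa only [Pi.add_apply, add_neg_le_iff_le_add, zero_add] using hle

lemma rankOneConvexSet_RcoF (E : Set (Mat N n)) : RankOneConvexSet (RcoF E) := by
  intro A hA B hB hrank t ht f hf hE
  calc f (t • A + (1 - t) • B) ≤ t * f A + (1 - t) * f B := hf t ht A B hrank
    _ ≤ 0 := add_nonpos (mul_nonpos_of_nonneg_of_nonpos ht.1 (hA f hf hE))
      (mul_nonpos_of_nonneg_of_nonpos (sub_nonneg.mpr ht.2) (hB f hf hE))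

end RankOneConvexity

section RankTwoByTwo

variable {n K R : Type*} [Fintype n] [Field K] [CommRing R]

lemma matrix_rank_eq_zero_iff {A : Matrix n n K} : A.rank = 0 ↔ A = 0 := by
  classical
  rw [Matrix.rank, Submodule.finrank_eq_zero, LinearMap.range_eq_bot,
    ← Matrix.toLin'_apply', LinearEquiv.map_eq_zero_iff]

lemma matrix_rank_eq_card_iff_det_ne_zero [DecidableEq n] {A : Matrix n n K} :
    A.rank = Fintype.card n ↔ A.det ≠ 0 := by
  rw [Matrix.rank_eq_finrank_span_row, eq_comm]
  refine (linearIndependent_iff_card_eq_finrank_span (b := A.row)).symm.trans ?_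
  rw [Matrix.linearIndependent_rows_iff_isUnit, Matrix.isUnit_iff_isUnit_det, isUnit_iff_ne_zero]

lemma rank_eq_one_iff_of_fin_two {A : Matrix (Fin 2) (Fin 2) K} :
    A.rank = 1 ↔ A ≠ 0 ∧ A.det = 0 := by
  have hzero := matrix_rank_eq_zero_iff (A := A)
  have htwo := matrix_rank_eq_card_iff_det_ne_zero (A := A)
  have hle := A.rank_le_card_width
  rw [Fintype.card_fin] at htwo hle
  rw [← not_ne_iff (a := A.det), ← htwo, ne_eq, ← hzero]
  omega

lemma det_combo_fin_two (t : R) (A B : Matrix (Fin 2) (Fin 2) R) :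
    (t • A + (1 - t) • B).det =
      t * A.det + (1 - t) * B.det - t * (1 - t) * (A - B).det := by
  simp only [Matrix.det_fin_two, Matrix.sub_apply, Matrix.add_apply, Matrix.smul_apply,
    smul_eq_mul]
  ring

lemma rankOneConvexFun_const_mul_det (k : ℝ) :
    RankOneConvexFun fun ξ : Mat 2 2 => k * ξ.det := by
  intro t _ ξ η hrank
  refine le_of_eq ?_
  simp only [det_combo_fin_two, (rank_eq_one_iff_of_fin_two.mp hrank).2]
  ring

lemma RankOneConvexSet.combo_mem_of_det_sub_eq_zero {S : Set (Mat 2 2)} (hS : RankOneConvexSet S)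
    {A B : Mat 2 2} (hA : A ∈ S) (hB : B ∈ S) (hAB : (A - B).det = 0) {t : ℝ}
    (ht : t ∈ Icc (0 : ℝ) 1) : t • A + (1 - t) • B ∈ S := by
  obtain rfl | hne := eq_or_ne A B
  · rwa [← add_smul, add_sub_cancel, one_smul]
  · exact hS A hA B hB (rank_eq_one_iff_of_fin_two.mpr ⟨sub_ne_zero.mpr hne, hAB⟩) t ht

end RankTwoByTwo

section SingularValues

variable {n : ℕ} (ξ : Matrix (Fin n) (Fin n) ℝ)

lemma singularValues_nonneg (i : Fin n) : 0 ≤ singularValues ξ i := Real.sqrt_nonneg _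

lemma monotone_singularValues : Monotone (singularValues ξ) :=
  fun _ _ hij => Real.sqrt_le_sqrt <|
    Tuple.monotone_sort (Matrix.isHermitian_mul_conjTranspose_self ξ).eigenvalues hij

lemma prod_singularValues : ∏ i, singularValues ξ i = |ξ.det| := by
  have hH := Matrix.isHermitian_mul_conjTranspose_self ξ
  have hnonneg := (Matrix.posSemidef_self_mul_conjTranspose ξ).eigenvalues_nonneg
  calc ∏ i, singularValues ξ i = ∏ i, √(hH.eigenvalues i) :=
        Equiv.prod_comp (Tuple.sort hH.eigenvalues) fun i => √(hH.eigenvalues i)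
    _ = √(∏ i, hH.eigenvalues i) := (Real.sqrt_prod _ fun i _ => hnonneg i).symm
    _ = √(ξ * ξ.conjTranspose).det := by rw [hH.det_eq_prod_eigenvalues]; rfl
    _ = |ξ.det| := by
        rw [Matrix.det_mul, Matrix.det_conjTranspose, star_trivial, Real.sqrt_mul_self_eq_abs]

lemma sum_sq_singularValues : ∑ i, singularValues ξ i ^ 2 = (ξ * ξ.conjTranspose).trace := by
  have hH := Matrix.isHermitian_mul_conjTranspose_self ξ
  have hnonneg := (Matrix.posSemidef_self_mul_conjTranspose ξ).eigenvalues_nonneg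
  calc ∑ i, singularValues ξ i ^ 2
      = ∑ i, hH.eigenvalues (Tuple.sort hH.eigenvalues i) :=
        Finset.sum_congr rfl fun i _ => Real.sq_sqrt (hnonneg _)
    _ = ∑ i, hH.eigenvalues i := Equiv.sum_comp _ _
    _ = (ξ * ξ.conjTranspose).trace := by rw [hH.trace_eq_sum_eigenvalues]; rfl

end SingularValues

section ConformalCoordinates

/-- The conformal coordinates `(z, w)` of a real `2 × 2` matrix, for which the matrix acts on
`ℝ² = ℂ` as `h ↦ z h + w h̄`: `z` is its conformal part and `w` its anticonformal part. -/
noncomputable def conformalCoords : Mat 2 2 ≃ₗ[ℝ] ℂ × ℂ where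
  toFun ξ := (⟨(ξ 0 0 + ξ 1 1) / 2, (ξ 1 0 - ξ 0 1) / 2⟩,
    ⟨(ξ 0 0 - ξ 1 1) / 2, (ξ 1 0 + ξ 0 1) / 2⟩)
  invFun p := !![p.1.re + p.2.re, p.2.im - p.1.im; p.1.im + p.2.im, p.1.re - p.2.re]
  map_add' ξ η := by
    refine Prod.ext (Complex.ext ?_ ?_) (Complex.ext ?_ ?_) <;>
      simp only [Matrix.add_apply, Prod.fst_add, Prod.snd_add, Complex.add_re, Complex.add_im] <;>
      ring
  map_smul' t ξ := by
    refine Prod.ext (Complex.ext ?_ ?_) (Complex.ext ?_ ?_) <;>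
      simp only [Matrix.smul_apply, Prod.smul_fst, Prod.smul_snd, Complex.smul_re,
        Complex.smul_im, RingHom.id_apply, smul_eq_mul] <;>
      ring
  left_inv ξ := by
    ext i j
    fin_cases i <;> fin_cases j <;>
      simp only [Fin.zero_eta, Fin.mk_one, Matrix.of_apply, Matrix.cons_val', Matrix.cons_val_zero,
        Matrix.cons_val_one, Matrix.cons_val_fin_one] <;>
      ring
  right_inv p := by
    refine Prod.ext (Complex.ext ?_ ?_) (Complex.ext ?_ ?_) <;>
      simp only [Matrix.of_apply, Matrix.cons_val', Matrix.cons_val_zero, Matrix.cons_val_one,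
        Matrix.cons_val_fin_one] <;>
      ring

lemma norm_conformalCoords_fst_sq (ξ : Mat 2 2) :
    ‖(conformalCoords ξ).1‖ ^ 2 = ((ξ 0 0 + ξ 1 1) / 2) ^ 2 + ((ξ 1 0 - ξ 0 1) / 2) ^ 2 := by
  rw [Complex.sq_norm, Complex.normSq_apply, sq, sq]
  rfl

lemma norm_conformalCoords_snd_sq (ξ : Mat 2 2) :
    ‖(conformalCoords ξ).2‖ ^ 2 = ((ξ 0 0 - ξ 1 1) / 2) ^ 2 + ((ξ 1 0 + ξ 0 1) / 2) ^ 2 := by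
  rw [Complex.sq_norm, Complex.normSq_apply, sq, sq]
  rfl

lemma norm_conformalCoords_fst_of_isSymm {ξ : Mat 2 2} (hξ : ξ.IsSymm) :
    ‖(conformalCoords ξ).1‖ = |ξ.trace| / 2 := by
  have hsq : ‖(conformalCoords ξ).1‖ ^ 2 = (|ξ.trace| / 2) ^ 2 := by
    rw [norm_conformalCoords_fst_sq, hξ.apply 0 1, div_pow |_|, sq_abs, Matrix.trace_fin_two]
    ring
  exact (sq_eq_sq₀ (norm_nonneg _) (by positivity)).mp hsq

lemma det_eq_norm_conformalCoords (ξ : Mat 2 2) :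
    ξ.det = ‖(conformalCoords ξ).1‖ ^ 2 - ‖(conformalCoords ξ).2‖ ^ 2 := by
  rw [norm_conformalCoords_fst_sq, norm_conformalCoords_snd_sq, Matrix.det_fin_two]
  ring

lemma trace_mul_conjTranspose_eq_norm_conformalCoords (ξ : Mat 2 2) :
    (ξ * ξ.conjTranspose).trace =
      2 * (‖(conformalCoords ξ).1‖ ^ 2 + ‖(conformalCoords ξ).2‖ ^ 2) := by
  rw [norm_conformalCoords_fst_sq, norm_conformalCoords_snd_sq]
  simp only [Matrix.trace_fin_two, Matrix.mul_apply, Fin.sum_univ_two,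
    Matrix.conjTranspose_apply, star_trivial]
  ring

lemma convexOn_norm_conformalCoords_fst :
    ConvexOn ℝ univ fun ξ : Mat 2 2 => ‖(conformalCoords ξ).1‖ :=
  (convexOn_norm convex_univ).comp_linearMap (LinearMap.fst ℝ ℂ ℂ ∘ₗ conformalCoords.toLinearMap)

lemma eq_and_eq_of_mul_eq_of_sq_add_sq_eq {p q r s : ℝ} (hp : 0 ≤ p) (hpq : p ≤ q) (hr : 0 ≤ r)
    (hrs : r ≤ s) (hmul : p * q = r * s) (hsq : p ^ 2 + q ^ 2 = r ^ 2 + s ^ 2) :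
    p = r ∧ q = s := by
  have hadd : p + q = r + s :=
    (sq_eq_sq₀ (by linarith) (by linarith)).mp (by linear_combination hsq + 2 * hmul)
  have hsub : q - p = s - r :=
    (sq_eq_sq₀ (by linarith) (by linarith)).mp (by linear_combination hsq - 2 * hmul)
  constructor <;> linarith

lemma singularValues_eq_conformalCoords (ξ : Mat 2 2) :
    singularValues ξ 0 = |‖(conformalCoords ξ).1‖ - ‖(conformalCoords ξ).2‖| ∧
      singularValues ξ 1 = ‖(conformalCoords ξ).1‖ + ‖(conformalCoords ξ).2‖ := by
  have hprod := prod_singularValues ξ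
  have hsum := sum_sq_singularValues ξ
  rw [Fin.prod_univ_two, det_eq_norm_conformalCoords] at hprod
  rw [Fin.sum_univ_two, trace_mul_conjTranspose_eq_norm_conformalCoords] at hsum
  set r := ‖(conformalCoords ξ).1‖
  set s := ‖(conformalCoords ξ).2‖
  have hr : 0 ≤ r := norm_nonneg _
  have hs : 0 ≤ s := norm_nonneg _
  refine eq_and_eq_of_mul_eq_of_sq_add_sq_eq (singularValues_nonneg ξ 0)
    (monotone_singularValues ξ (Fin.zero_le 1)) (abs_nonneg _)
    (abs_le.mpr ⟨by linarith, by linarith⟩) ?_ ?_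
  · rw [hprod, sq_sub_sq, abs_mul, abs_of_nonneg (add_nonneg hr hs), mul_comm]
  · rw [hsum, sq_abs]
    ring

/-- The linear map multiplying the conformal coordinates `z` and `w` by `u` and `v`. For unimodular
`u` and `v` this is left and right multiplication of matrices by plane rotations. -/
noncomputable def conformalRotation (u v : ℂ) : Mat 2 2 →ₗ[ℝ] Mat 2 2 :=
  conformalCoords.symm.toLinearMap ∘ₗ
    (LinearMap.mulLeft ℝ u).prodMap (LinearMap.mulLeft ℝ v) ∘ₗ conformalCoords.toLinearMap

lemma conformalCoords_conformalRotation (u v : ℂ) (ξ : Mat 2 2) :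
    conformalCoords (conformalRotation u v ξ) =
      (u * (conformalCoords ξ).1, v * (conformalCoords ξ).2) := by
  simp [conformalRotation]

end ConformalCoordinates

section ConformalLevel

/-- The matrices whose conformal part has modulus `r` and whose determinant is `d`. For
`0 ≤ x ≤ y`, the level with `r = (x + y) / 2` and `d = x * y` consists of the matrices of
nonnegative determinant with singular values `x` and `y`. -/
def conformalLevel (r d : ℝ) : Set (Mat 2 2) :=
  {ξ | ‖(conformalCoords ξ).1‖ = r ∧ ξ.det = d}

lemma conformalRotation_mem_conformalLevel {u v : ℂ} (hu : ‖u‖ = 1) (hv : ‖v‖ = 1) (ξ : Mat 2 2) :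
    conformalRotation u v ξ ∈ conformalLevel ‖(conformalCoords ξ).1‖ ξ.det := by
  simp only [conformalLevel, mem_ofPred_eq, det_eq_norm_conformalCoords,
    conformalCoords_conformalRotation, norm_mul, hu, hv, one_mul, and_self]

lemma exists_norm_eq_one_and_eq_mul {z z' : ℂ} (h : ‖z‖ = ‖z'‖) :
    ∃ u : ℂ, ‖u‖ = 1 ∧ z = u * z' := by
  obtain ⟨c, hc, hcz⟩ := Complex.exists_norm_mul_eq_self z
  obtain ⟨c', hc', hcz'⟩ := Complex.exists_norm_eq_mul_self z'
  refine ⟨c * c', by rw [norm_mul, hc, hc', one_mul], ?_⟩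
  rw [mul_assoc, ← hcz', ← h, hcz]

lemma exists_conformalRotation_eq {ξ M : Mat 2 2}
    (hξ : ξ ∈ conformalLevel ‖(conformalCoords M).1‖ M.det) :
    ∃ u v : ℂ, ‖u‖ = 1 ∧ ‖v‖ = 1 ∧ ξ = conformalRotation u v M := by
  have hsnd : ‖(conformalCoords ξ).2‖ = ‖(conformalCoords M).2‖ := by
    have hdet := hξ.2
    rw [det_eq_norm_conformalCoords, det_eq_norm_conformalCoords, hξ.1, sub_right_inj] at hdet
    exact (sq_eq_sq₀ (norm_nonneg _) (norm_nonneg _)).mp hdet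
  obtain ⟨u, hu, hξu⟩ := exists_norm_eq_one_and_eq_mul hξ.1
  obtain ⟨v, hv, hξv⟩ := exists_norm_eq_one_and_eq_mul hsnd
  refine ⟨u, v, hu, hv, conformalCoords.injective ?_⟩
  rw [conformalCoords_conformalRotation, ← hξu, ← hξv]

lemma singularValues_eq_and_det_pos_iff {x y : ℝ} (hx : 0 < x) (hxy : x ≤ y) (ξ : Mat 2 2) :
    (singularValues ξ 0, singularValues ξ 1) = (x, y) ∧ 0 < ξ.det ↔
      ξ ∈ conformalLevel ((x + y) / 2) (x * y) := by
  obtain ⟨hzero, hone⟩ := singularValues_eq_conformalCoords ξ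
  rw [Prod.mk.injEq, hzero, hone, conformalLevel, mem_ofPred_eq, det_eq_norm_conformalCoords]
  have hr : 0 ≤ ‖(conformalCoords ξ).1‖ := norm_nonneg _
  have hs : 0 ≤ ‖(conformalCoords ξ).2‖ := norm_nonneg _
  generalize ‖(conformalCoords ξ).1‖ = r at *
  generalize ‖(conformalCoords ξ).2‖ = s at *
  constructor
  · rintro ⟨⟨rfl, rfl⟩, hdet⟩
    rw [abs_of_nonneg (sub_nonneg.mpr (abs_le_of_sq_le_sq' (by linarith) hr).2)]
    constructor <;> ring
  · rintro ⟨rfl, hdet⟩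
    have hs' : s = (y - x) / 2 :=
      (sq_eq_sq₀ hs (by linarith)).mp (by linear_combination -hdet)
    refine ⟨⟨?_, ?_⟩, hdet ▸ mul_pos hx (hx.trans_le hxy)⟩
    · rw [hs', abs_of_nonneg (by linarith)]
      ring
    · rw [hs']
      ring

end ConformalLevel

section Lamination

variable {S : Set (Mat 2 2)}

lemma RankOneConvexSet.conformalLevel_combo_subset (hS : RankOneConvexSet S) {A B : Mat 2 2}
    {r d r₁ d₁ r₂ d₂ t : ℝ} (hA : A ∈ conformalLevel r₁ d₁) (hB : B ∈ conformalLevel r₂ d₂)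
    (hAB : (A - B).det = 0) (ht : t ∈ Icc (0 : ℝ) 1)
    (hmem : t • A + (1 - t) • B ∈ conformalLevel r d) (h₁ : conformalLevel r₁ d₁ ⊆ S)
    (h₂ : conformalLevel r₂ d₂ ⊆ S) : conformalLevel r d ⊆ S := by
  obtain ⟨⟨rfl, rfl⟩, ⟨rfl, rfl⟩, ⟨rfl, rfl⟩⟩ := And.intro hA (And.intro hB hmem)
  intro ξ hξ
  obtain ⟨u, v, hu, hv, rfl⟩ := exists_conformalRotation_eq hξ
  rw [map_add, map_smul, map_smul]
  refine hS.combo_mem_of_det_sub_eq_zero (h₁ (conformalRotation_mem_conformalLevel hu hv A))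
    (h₂ (conformalRotation_mem_conformalLevel hu hv B)) ?_ ht
  rw [← map_sub, (conformalRotation_mem_conformalLevel hu hv (A - B)).2, hAB]

lemma mem_conformalLevel_lowerTriangular {R r s σ : ℝ} (hR : 0 ≤ R)
    (hσ : R ^ 2 = r ^ 2 + (σ / 2) ^ 2) :
    !![r + s, 0; σ, r - s] ∈ conformalLevel R (r ^ 2 - s ^ 2) := by
  constructor
  · refine (sq_eq_sq₀ (norm_nonneg _) hR).mp ?_
    rw [norm_conformalCoords_fst_sq, hσ]
    simp
  · rw [Matrix.det_fin_two_of]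
    ring

lemma RankOneConvexSet.conformalLevel_subset_of_le (hS : RankOneConvexSet S) {r R d : ℝ}
    (hrR : r ≤ R) (hR : conformalLevel R d ⊆ S) : conformalLevel r d ⊆ S := by
  obtain hempty | ⟨ξ, hr, hd⟩ := (conformalLevel r d).eq_empty_or_nonempty
  · exact hempty ▸ empty_subset S
  rw [det_eq_norm_conformalCoords, hr] at hd
  subst hd
  set s := ‖(conformalCoords ξ).2‖
  have hr₀ : 0 ≤ r := hr ▸ norm_nonneg _
  set τ := 2 * √(R ^ 2 - r ^ 2)
  have hτ : R ^ 2 = r ^ 2 + (τ / 2) ^ 2 := by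
    rw [mul_div_cancel_left₀ _ two_ne_zero, Real.sq_sqrt, add_sub_cancel]
    exact sub_nonneg.mpr (pow_le_pow_left₀ hr₀ hrR 2)
  have hsub : (!![r + s, 0; τ, r - s] - !![r + s, 0; -τ, r - s]).det = 0 := by
    simp [Matrix.det_fin_two]
  have hmid : (1 / 2 : ℝ) • !![r + s, 0; τ, r - s] + (1 - 1 / 2 : ℝ) • !![r + s, 0; -τ, r - s] =
      !![r + s, 0; 0, r - s] := by
    ext i j
    fin_cases i <;> fin_cases j <;>
      simp only [Fin.zero_eta, Fin.mk_one, Matrix.add_apply, Matrix.smul_apply, Matrix.of_apply,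
        Matrix.cons_val', Matrix.cons_val_zero, Matrix.cons_val_one, Matrix.cons_val_fin_one,
        smul_eq_mul] <;>
      ring
  have hτ' : R ^ 2 = r ^ 2 + (-τ / 2) ^ 2 := by rw [hτ, neg_div, neg_sq]
  refine hS.conformalLevel_combo_subset
    (mem_conformalLevel_lowerTriangular (hr₀.trans hrR) hτ)
    (mem_conformalLevel_lowerTriangular (hr₀.trans hrR) hτ') hsub
    (t := 1 / 2) ⟨by norm_num, by norm_num⟩ ?_ hR hR
  rw [hmid]
  exact mem_conformalLevel_lowerTriangular hr₀ (by ring)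

lemma exists_isSymm_det_diagonal_sub_eq_zero {a₁ a₂ b₁ b₂ : ℝ} (hab₁ : a₁ ≤ b₁) (hba : b₁ ≤ a₂)
    (hab₂ : a₂ ≤ b₂) :
    ∃ B : Mat 2 2, B.IsSymm ∧ B.trace = b₁ + b₂ ∧ B.det = b₁ * b₂ ∧
      (Matrix.diagonal ![a₁, a₂] - B).det = 0 := by
  have hab : a₁ ≤ b₂ := hab₁.trans (hba.trans hab₂)
  obtain ⟨μ, ν, hμ, hν, hμν, rfl⟩ : b₁ ∈ segment ℝ a₁ a₂ := by
    rw [segment_eq_Icc (hab₁.trans hba)]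
    exact ⟨hab₁, hba⟩
  obtain rfl : ν = 1 - μ := by linarith
  simp only [smul_eq_mul]
  set b₁ := μ * a₁ + (1 - μ) * a₂
  set p := a₂ + μ * (b₂ - a₂)
  have hq : √((p - b₁) * (b₂ - p)) ^ 2 = (p - b₁) * (b₂ - p) := by
    refine Real.sq_sqrt (mul_nonneg ?_ ?_)
    · linarith [mul_nonneg hμ (sub_nonneg.mpr hab)]
    · linarith [mul_nonneg hν (sub_nonneg.mpr hab₂)]
  set q := √((p - b₁) * (b₂ - p))
  refine ⟨!![b₁ + b₂ - p, q; q, p], ?_, ?_, ?_, ?_⟩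
  · ext i j
    fin_cases i <;> fin_cases j <;> rfl
  · rw [Matrix.trace_fin_two_of]
    ring
  · rw [Matrix.det_fin_two_of]
    linear_combination -hq
  · have hdet : (Matrix.diagonal ![a₁, a₂] - !![b₁ + b₂ - p, q; q, p]).det =
        (a₁ - (b₁ + b₂ - p)) * (a₂ - p) - q ^ 2 := by
      simp [Matrix.det_fin_two, sq]
    rw [hdet, hq]
    ring

lemma RankOneConvexSet.conformalLevel_combo_subset_of_interlacing (hS : RankOneConvexSet S)
    {a₁ a₂ b₁ b₂ t : ℝ} (ha : 0 ≤ a₁ + a₂) (hab₁ : a₁ ≤ b₁) (hba : b₁ ≤ a₂) (hab₂ : a₂ ≤ b₂)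
    (hA : conformalLevel ((a₁ + a₂) / 2) (a₁ * a₂) ⊆ S)
    (hB : conformalLevel ((b₁ + b₂) / 2) (b₁ * b₂) ⊆ S) (ht : t ∈ Icc (0 : ℝ) 1) :
    conformalLevel (t * ((a₁ + a₂) / 2) + (1 - t) * ((b₁ + b₂) / 2))
      (t * (a₁ * a₂) + (1 - t) * (b₁ * b₂)) ⊆ S := by
  obtain ⟨B, hBsymm, hBtrace, hBdet, hAB⟩ := exists_isSymm_det_diagonal_sub_eq_zero hab₁ hba hab₂
  set A : Mat 2 2 := Matrix.diagonal ![a₁, a₂]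
  have hAsymm : A.IsSymm := Matrix.isSymm_diagonal _
  have hAtrace : A.trace = a₁ + a₂ := by simp [A]
  have hAdet : A.det = a₁ * a₂ := by simp [A, Matrix.det_diagonal]
  have hb : 0 ≤ b₁ + b₂ := by linarith
  have htrace : (t • A + (1 - t) • B).trace = t * (a₁ + a₂) + (1 - t) * (b₁ + b₂) := by
    rw [Matrix.trace_add, Matrix.trace_smul, Matrix.trace_smul, hAtrace, hBtrace, smul_eq_mul,
      smul_eq_mul]
  have hnonneg : 0 ≤ t * (a₁ + a₂) + (1 - t) * (b₁ + b₂) :=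
    add_nonneg (mul_nonneg ht.1 ha) (mul_nonneg (sub_nonneg.mpr ht.2) hb)
  refine hS.conformalLevel_combo_subset (A := A) (B := B) ⟨?_, hAdet⟩ ⟨?_, hBdet⟩ hAB ht
    ⟨?_, ?_⟩ hA hB
  · rw [norm_conformalCoords_fst_of_isSymm hAsymm, hAtrace, abs_of_nonneg ha]
  · rw [norm_conformalCoords_fst_of_isSymm hBsymm, hBtrace, abs_of_nonneg hb]
  · rw [norm_conformalCoords_fst_of_isSymm ((hAsymm.smul t).add (hBsymm.smul (1 - t))), htrace,
      abs_of_nonneg hnonneg]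
    ring
  · rw [det_combo_fin_two, hAB, hAdet, hBdet]
    ring

end Lamination

section ConformalTrapezoid

/-- The matrices whose conformal norm and determinant form a point of the plane lying between the
horizontal lines through `(r, d)` and `(r', d')` and to the left of the chord joining these two
points. The chord inequality is multiplied out to avoid dividing by `d' - d`. -/
def conformalTrapezoid (r d r' d' : ℝ) : Set (Mat 2 2) :=
  {ξ | d ≤ ξ.det ∧ ξ.det ≤ d' ∧
    (d' - d) * (‖(conformalCoords ξ).1‖ - r) ≤ (ξ.det - d) * (r' - r)}

lemma RcoF_union_conformalLevel_subset {r d r' d' : ℝ} (hd : d ≤ d') :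
    RcoF (conformalLevel r d ∪ conformalLevel r' d') ⊆ conformalTrapezoid r d r' d' := by
  intro ξ hξ
  have hlower : -1 * ξ.det ≤ -1 * d :=
    RcoF.le_of_forall_le hξ (rankOneConvexFun_const_mul_det (-1)) <| by
      rintro η (⟨-, hη⟩ | ⟨-, hη⟩) <;> linarith
  have hupper : 1 * ξ.det ≤ d' :=
    RcoF.le_of_forall_le hξ (rankOneConvexFun_const_mul_det 1) <| by
      rintro η (⟨-, hη⟩ | ⟨-, hη⟩) <;> linarith
  have hchord : (d' - d) * ‖(conformalCoords ξ).1‖ + -(r' - r) * ξ.det ≤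
      (d' - d) * r - (r' - r) * d :=
    RcoF.le_of_forall_le hξ ((rankOneConvexFun_of_convexOn
      (convexOn_norm_conformalCoords_fst.smul (sub_nonneg.mpr hd))).add
        (rankOneConvexFun_const_mul_det (-(r' - r)))) <| by
      rintro η (⟨hηr, hηd⟩ | ⟨hηr, hηd⟩) <;>
        simp only [Pi.add_apply, smul_eq_mul, hηr, hηd] <;> linarith
  exact ⟨by linarith, by linarith, by linarith⟩

lemma RankOneConvexSet.conformalTrapezoid_subset {S : Set (Mat 2 2)} (hS : RankOneConvexSet S)
    {a₁ a₂ b₁ b₂ : ℝ} (ha : 0 ≤ a₁ + a₂) (hab₁ : a₁ ≤ b₁) (hba : b₁ ≤ a₂) (hab₂ : a₂ ≤ b₂)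
    (hd : a₁ * a₂ < b₁ * b₂) (hA : conformalLevel ((a₁ + a₂) / 2) (a₁ * a₂) ⊆ S)
    (hB : conformalLevel ((b₁ + b₂) / 2) (b₁ * b₂) ⊆ S) :
    conformalTrapezoid ((a₁ + a₂) / 2) (a₁ * a₂) ((b₁ + b₂) / 2) (b₁ * b₂) ⊆ S := by
  rintro ξ ⟨hlower, hupper, hchord⟩
  obtain ⟨t, t', ht, ht', htt', hdet⟩ : ξ.det ∈ segment ℝ (a₁ * a₂) (b₁ * b₂) := by
    rw [segment_eq_Icc hd.le]
    exact ⟨hlower, hupper⟩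
  obtain rfl : t' = 1 - t := by linarith
  simp only [smul_eq_mul] at hdet
  have hle : ‖(conformalCoords ξ).1‖ ≤ t * ((a₁ + a₂) / 2) + (1 - t) * ((b₁ + b₂) / 2) := by
    refine le_of_mul_le_mul_left ?_ (sub_pos.mpr hd)
    rw [← hdet] at hchord
    linarith
  exact hS.conformalLevel_subset_of_le hle
    (hS.conformalLevel_combo_subset_of_interlacing ha hab₁ hba hab₂ hA hB
      ⟨ht, sub_nonneg.mp ht'⟩) ⟨rfl, hdet.symm⟩

theorem RcoF_union_conformalLevel {a₁ a₂ b₁ b₂ : ℝ} (ha : 0 ≤ a₁ + a₂) (hab₁ : a₁ ≤ b₁)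
    (hba : b₁ ≤ a₂) (hab₂ : a₂ ≤ b₂) (hd : a₁ * a₂ < b₁ * b₂) :
    RcoF (conformalLevel ((a₁ + a₂) / 2) (a₁ * a₂) ∪ conformalLevel ((b₁ + b₂) / 2) (b₁ * b₂)) =
      conformalTrapezoid ((a₁ + a₂) / 2) (a₁ * a₂) ((b₁ + b₂) / 2) (b₁ * b₂) :=
  (RcoF_union_conformalLevel_subset hd.le).antisymm <|
    (rankOneConvexSet_RcoF _).conformalTrapezoid_subset ha hab₁ hba hab₂ hd
      (subset_union_left.trans subset_RcoF) (subset_union_right.trans subset_RcoF)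

end ConformalTrapezoid

section Region

variable {a₁ a₂ b₁ b₂ θ x y : ℝ}

lemma mem_Ioo_of_mul_eq (hab₁ : a₁ < b₁) (hba : b₁ < a₂) (hab₂ : a₂ < b₂)
    (hθ : θ * (b₁ + b₂ - a₁ - a₂) = b₁ * b₂ - a₁ * a₂) : θ ∈ Ioo b₁ a₂ := by
  have hD : 0 < b₁ + b₂ - a₁ - a₂ := by linarith
  constructor
  · have hmul : (θ - b₁) * (b₁ + b₂ - a₁ - a₂) = (a₂ - b₁) * (b₁ - a₁) := by
      linear_combination hθ
    have hpos := mul_pos (sub_pos.mpr hba) (sub_pos.mpr hab₁)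
    exact sub_pos.mp (pos_of_mul_pos_left (hmul ▸ hpos) hD.le)
  · have hmul : (a₂ - θ) * (b₁ + b₂ - a₁ - a₂) = (a₂ - b₁) * (b₂ - a₂) := by
      linear_combination -hθ
    have hpos := mul_pos (sub_pos.mpr hba) (sub_pos.mpr hab₂)
    exact sub_pos.mp (pos_of_mul_pos_left (hmul ▸ hpos) hD.le)

lemma left_le_of_sub_mul_sub_le (ha₂ : 0 < a₂) (haθ : θ ∈ Ioo a₁ a₂) (hx : 0 < x)
    (hmul : a₁ * a₂ ≤ x * y) (hhyp : (θ - x) * (y - θ) ≤ (θ - a₁) * (a₂ - θ)) : a₁ ≤ x := by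
  by_contra! hxa
  have hay : a₂ < y := by
    refine lt_of_mul_lt_mul_left ?_ hx.le
    exact (mul_lt_mul_of_pos_right hxa ha₂).trans_le hmul
  exact hhyp.not_gt (mul_lt_mul'' (by linarith) (by linarith) (by linarith [haθ.1])
    (by linarith [haθ.2]))

lemma le_right_of_sub_mul_sub_le (hb₂ : 0 < b₂) (hbθ : θ ∈ Ioo b₁ b₂) (hx : 0 < x)
    (hmul : x * y ≤ b₁ * b₂) (hhyp : (θ - x) * (y - θ) ≤ (θ - b₁) * (b₂ - θ)) : y ≤ b₂ := by
  by_contra! hby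
  have hxb : x < b₁ := by
    refine lt_of_mul_lt_mul_right ?_ hb₂.le
    exact (mul_lt_mul_of_pos_left hby hx).trans_le hmul
  exact hhyp.not_gt (mul_lt_mul'' (by linarith) (by linarith) (by linarith [hbθ.1])
    (by linarith [hbθ.2]))

lemma sub_mul_sub_le_of_mem_Icc (hbθ : θ ∈ Icc b₁ b₂) (hbx : b₁ ≤ x) (hxy : x ≤ y) (hyb : y ≤ b₂) :
    (θ - x) * (y - θ) ≤ (θ - b₁) * (b₂ - θ) := by
  have hnonneg : 0 ≤ (θ - b₁) * (b₂ - θ) :=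
    mul_nonneg (sub_nonneg.mpr hbθ.1) (sub_nonneg.mpr hbθ.2)
  rcases le_total x θ with hxθ | hθx
  · rcases le_total y θ with hyθ | hθy
    · exact (mul_nonpos_of_nonneg_of_nonpos (by linarith) (by linarith)).trans hnonneg
    · exact mul_le_mul (by linarith) (by linarith) (by linarith) (by linarith [hbθ.1])
  · exact (mul_nonpos_of_nonpos_of_nonneg (by linarith) (by linarith)).trans hnonneg

lemma region_iff_sub_mul_sub_le (ha₁ : 0 < a₁) (hab₁ : a₁ < b₁) (hba : b₁ < a₂) (hab₂ : a₂ < b₂)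
    (hθ : θ * (b₁ + b₂ - a₁ - a₂) = b₁ * b₂ - a₁ * a₂) (hx : 0 < x) (hxy : x ≤ y) :
    (a₁ ≤ x ∧ x ≤ y ∧ y ≤ b₂ ∧ a₁ * a₂ / x ≤ y ∧
      (a₁ ≤ x → x ≤ b₁ → y ≤ (-(a₁ * a₂) + θ * (a₁ + a₂) - θ * x) / (-x + θ)) ∧
      y ≤ b₁ * b₂ / x) ↔
    a₁ * a₂ ≤ x * y ∧ x * y ≤ b₁ * b₂ ∧ (θ - x) * (y - θ) ≤ (θ - a₁) * (a₂ - θ) := by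
  obtain ⟨hbθ, hθa⟩ := mem_Ioo_of_mul_eq hab₁ hba hab₂ hθ
  have hhyp : (θ - a₁) * (a₂ - θ) = (θ - b₁) * (b₂ - θ) := by linear_combination -hθ
  rw [div_le_iff₀' hx, le_div_iff₀' hx]
  constructor
  · rintro ⟨hax, -, hyb, hlower, hcurve, hupper⟩
    refine ⟨hlower, hupper, ?_⟩
    rcases le_or_gt x b₁ with hxb | hbx
    · have hy := hcurve hax hxb
      rw [le_div_iff₀ (by linarith)] at hy
      linarith
    · exact hhyp ▸ sub_mul_sub_le_of_mem_Icc ⟨hbθ.le, by linarith⟩ hbx.le hxy hyb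
  · rintro ⟨hlower, hupper, hle⟩
    have hax : a₁ ≤ x := left_le_of_sub_mul_sub_le (by linarith) ⟨by linarith, hθa⟩ hx hlower hle
    have hyb : y ≤ b₂ := le_right_of_sub_mul_sub_le (by linarith) ⟨hbθ, by linarith⟩ hx hupper
      (hhyp ▸ hle)
    refine ⟨hax, hxy, hyb, hlower, fun _ hxb => ?_, hupper⟩
    rw [le_div_iff₀ (by linarith)]
    linarith

lemma chord_le_iff_sub_mul_sub_le (hD : 0 < b₁ + b₂ - a₁ - a₂)
    (hθ : θ * (b₁ + b₂ - a₁ - a₂) = b₁ * b₂ - a₁ * a₂) :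
    (b₁ * b₂ - a₁ * a₂) * ((x + y) / 2 - (a₁ + a₂) / 2) ≤
        (x * y - a₁ * a₂) * ((b₁ + b₂) / 2 - (a₁ + a₂) / 2) ↔
      (θ - x) * (y - θ) ≤ (θ - a₁) * (a₂ - θ) := by
  have hdiff : (x * y - a₁ * a₂) * ((b₁ + b₂) / 2 - (a₁ + a₂) / 2) -
      (b₁ * b₂ - a₁ * a₂) * ((x + y) / 2 - (a₁ + a₂) / 2) =
        (b₁ + b₂ - a₁ - a₂) / 2 * ((θ - a₁) * (a₂ - θ) - (θ - x) * (y - θ)) := by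
    linear_combination (x + y - a₁ - a₂) / 2 * hθ
  rw [← sub_nonneg, hdiff, mul_nonneg_iff_of_pos_left (half_pos hD), sub_nonneg]

lemma mem_region_and_det_pos_iff (ha₁ : 0 < a₁) (hab₁ : a₁ < b₁) (hba : b₁ < a₂) (hab₂ : a₂ < b₂)
    (hθ : θ * (b₁ + b₂ - a₁ - a₂) = b₁ * b₂ - a₁ * a₂) (ξ : Mat 2 2) :
    (singularValues ξ 0, singularValues ξ 1) ∈ {p : ℝ × ℝ | a₁ ≤ p.1 ∧ p.1 ≤ p.2 ∧ p.2 ≤ b₂ ∧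
        a₁ * a₂ / p.1 ≤ p.2 ∧
        (a₁ ≤ p.1 → p.1 ≤ b₁ →
          p.2 ≤ (-(a₁ * a₂) + θ * (a₁ + a₂) - θ * p.1) / (-p.1 + θ)) ∧
        p.2 ≤ b₁ * b₂ / p.1} ∧ 0 < ξ.det ↔
      ξ ∈ conformalTrapezoid ((a₁ + a₂) / 2) (a₁ * a₂) ((b₁ + b₂) / 2) (b₁ * b₂) := by
  have ha : 0 < a₁ * a₂ := mul_pos ha₁ (by linarith)
  rw [← and_iff_left_of_imp fun h : ξ ∈ conformalTrapezoid _ _ _ _ => ha.trans_le h.1]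
  refine and_congr_left fun hdet => ?_
  set x := singularValues ξ 0
  set y := singularValues ξ 1
  have hxy : x ≤ y := monotone_singularValues ξ (Fin.zero_le 1)
  have hprod : x * y = ξ.det := by
    rw [← abs_of_pos hdet, ← prod_singularValues, Fin.prod_univ_two]
  have hx : 0 < x := (singularValues_nonneg ξ 0).lt_of_ne' fun h =>
    hdet.ne' (hprod.symm.trans (mul_eq_zero_of_left h y))
  obtain ⟨hnorm, -⟩ := (singularValues_eq_and_det_pos_iff hx hxy ξ).mp ⟨rfl, hdet⟩
  refine (region_iff_sub_mul_sub_le ha₁ hab₁ hba hab₂ hθ hx hxy).trans ?_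
  rw [conformalTrapezoid, mem_ofPred_eq, hnorm, ← hprod,
    chord_le_iff_sub_mul_sub_le (by linarith) hθ]

end Region

theorem stmt11 (a₁ a₂ b₁ b₂ θ : ℝ) (ha₁ : 0 < a₁) (hab : a₁ < b₁) (hba : b₁ < a₂)
    (hb₂ : a₂ < b₂) (hθ : θ = (-(a₁*a₂) + b₁*b₂) / (b₁ + b₂ - a₁ - a₂))
    (E : Set (Mat 2 2))
    (hE : E = {ξ : Mat 2 2 | ((singularValues ξ 0, singularValues ξ 1) = (a₁, a₂) ∨
      (singularValues ξ 0, singularValues ξ 1) = (b₁, b₂)) ∧ 0 < ξ.det})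
    (RΛ : Set (ℝ × ℝ))
    (hRΛ : RΛ = {p : ℝ × ℝ | a₁ ≤ p.1 ∧ p.1 ≤ p.2 ∧ p.2 ≤ b₂ ∧
      a₁ * a₂ / p.1 ≤ p.2 ∧
      (a₁ ≤ p.1 → p.1 ≤ b₁ → p.2 ≤ (-(a₁*a₂) + θ*(a₁+a₂) - θ*p.1) / (-p.1 + θ)) ∧
      p.2 ≤ b₁ * b₂ / p.1}) :
    RcoF E = {ξ : Mat 2 2 | (singularValues ξ 0, singularValues ξ 1) ∈ RΛ ∧ 0 < ξ.det} := by
  have hθ' : θ * (b₁ + b₂ - a₁ - a₂) = b₁ * b₂ - a₁ * a₂ := by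
    rw [hθ, div_mul_cancel₀ _ (by linarith)]
    ring
  have hlevels : E = conformalLevel ((a₁ + a₂) / 2) (a₁ * a₂) ∪
      conformalLevel ((b₁ + b₂) / 2) (b₁ * b₂) := by
    ext ξ
    rw [hE, mem_ofPred_eq, or_and_right,
      singularValues_eq_and_det_pos_iff ha₁ (hab.trans hba).le,
      singularValues_eq_and_det_pos_iff (ha₁.trans hab) (hba.trans hb₂).le, mem_union]
  have hdet : a₁ * a₂ < b₁ * b₂ := mul_lt_mul'' hab hb₂ ha₁.le (by linarith)
  rw [hlevels, RcoF_union_conformalLevel (by linarith) hab.le hba.le hb₂.le hdet]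
  ext ξ
  rw [hRΛ]
  exact (mem_region_and_det_pos_iff ha₁ hab hba hb₂ hθ' ξ).symm

end Statements
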